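/- Let (X,𝒜) and (Y,𝓑) be measurable spaces and let t : M(X,𝒜) → M(Y,𝓑) be a ring isomorphism. Then a maximal ideal M of M(X,𝒜) is real if and only if its image t(M) is a real maximal ideal of M(Y,𝓑). -/

import Mathlib

/-!
A ring isomorphism `t : M(X,𝒜) → M(Y,𝓑)` automatically fixes the constants: for each point `y`,
the map `r ↦ t(r)(y)` is a ring endomorphism of `ℝ`, and the identity is the only one
(`map_constM`). Hence `f - r ∈ M` if and only if `t(f) - r ∈ t(M)`, and, as `t` is surjective,
the two realness conditions say the same thing.
-/

open MeasureTheory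

/-- The ring `M(X, 𝒜)` of all real-valued measurable functions on a measurable
space `X`, as a subring of `X → ℝ` under pointwise operations. -/
def Mring (X : Type*) [MeasurableSpace X] : Subring (X → ℝ) where
  carrier := {f : X → ℝ | Measurable f}
  mul_mem' hf hg := hf.mul hg
  one_mem' := measurable_one
  add_mem' hf hg := hf.add hg
  zero_mem' := measurable_zero
  neg_mem' hf := hf.neg

/-- The constant function with value `r`, as an element of `M(X, 𝒜)`. -/
def constM (X : Type*) [MeasurableSpace X] (r : ℝ) : Mring X :=
  ⟨fun _ => r, measurable_const⟩

/-- A real maximal ideal: a maximal ideal modulo which every function is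
congruent to a constant. -/
def IsRealMax {X : Type*} [MeasurableSpace X] (M : Ideal (Mring X)) : Prop :=
  M.IsMaximal ∧ ∀ f : Mring X, ∃ r : ℝ, f - constM X r ∈ M

/-- The constant functions, as a ring homomorphism `ℝ → M(X, 𝒜)`. -/
def constHom (X : Type*) [MeasurableSpace X] : ℝ →+* Mring X where
  toFun := constM X
  map_one' := rfl
  map_mul' _ _ := rfl
  map_zero' := rfl
  map_add' _ _ := rfl

theorem map_constM {X Y : Type*} [MeasurableSpace X] [MeasurableSpace Y]
    (t : Mring X →+* Mring Y) (r : ℝ) : t (constM X r) = constM Y r := by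
  ext y
  let φ : ℝ →+* ℝ :=
    (Pi.evalRingHom (fun _ : Y => ℝ) y).comp ((Mring Y).subtype.comp (t.comp (constHom X)))
  exact congrArg (fun ψ : ℝ →+* ℝ => ψ r) (Subsingleton.elim φ (RingHom.id ℝ))

/-- If `t : M(X,𝒜) → M(Y,𝓑)` is a ring isomorphism, then a maximal ideal `M`
of `M(X,𝒜)` is real iff `t(M)` is a real maximal ideal of `M(Y,𝓑)`. -/
theorem stmt3 {X Y : Type*} [MeasurableSpace X] [MeasurableSpace Y]
    (t : Mring X ≃+* Mring Y) (M : Ideal (Mring X)) (hM : M.IsMaximal) :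
    IsRealMax M ↔ IsRealMax (Ideal.map (t.toRingHom) M) := by
  have key : ∀ (f : Mring X) (r : ℝ),
      t f - constM Y r ∈ Ideal.map t.toRingHom M ↔ f - constM X r ∈ M := by
    intro f r
    have h : t f - constM Y r = t (f - constM X r) := by
      rw [map_sub]
      exact congrArg (t f - ·) (map_constM t.toRingHom r).symm
    rw [h]
    constructor
    · intro hf
      obtain ⟨x, hx, hxf⟩ := (Ideal.mem_map_of_equiv t _).1 hf
      rwa [← t.injective hxf]
    · exact fun hf => Ideal.mem_map_of_mem t.toRingHom hf
  constructor
  · rintro ⟨-, h⟩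
    refine ⟨Ideal.map_isMaximal_of_equiv t, fun g => ?_⟩
    obtain ⟨f, rfl⟩ := t.surjective g
    obtain ⟨r, hr⟩ := h f
    exact ⟨r, (key f r).2 hr⟩
  · rintro ⟨-, h⟩
    refine ⟨hM, fun f => ?_⟩
    obtain ⟨r, hr⟩ := h (t f)
    exact ⟨r, (key f r).1 hr⟩
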